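/- arXiv:1102.0959 — 2 statements merged into one kernel-verified Lean document; each statement's English description precedes it below -/
import Mathlib

section
/- Let n ≥ 2 be an integer, let u₊ : (0,∞) → (−1,1) be the inverse of Γ₊ (so Γ₊(u₊(t)) = t for all t > 0), and define H₊(t) = (1 + u₊(t)²/(n−1))^{(1/n) − (1/2)} · (1 − u₊(t)²)^{−1/n} for t > 0. Then: (i) H₊(1) = 1; (ii) H₊ is differentiable on (0,∞) and its elasticity satisfies t·H₊'(t) = u₊(t)·H₊(t) for all t > 0; (iii) H₊ solves the characteristic equation ( H₊(t)² + t²·H₊'(t)²/(n−1) )^{(n−2)/2} · ( H₊(t)² − t²·H₊'(t)² ) = 1 for all t > 0. -/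
/-- The function `Γ₊` from the paper:
`Γ₊(s) = ((1+s)/(1-s))^(1/n) · exp( ((2-n)/(n√(n-1))) · arctan(s/√(n-1)) )`. -/
noncomputable def GammaPlus (n : ℕ) (s : ℝ) : ℝ :=
  ((1 + s) / (1 - s)) ^ ((1 : ℝ) / (n : ℝ)) *
    Real.exp (((2 - (n : ℝ)) / ((n : ℝ) * Real.sqrt ((n : ℝ) - 1))) *
      Real.arctan (s / Real.sqrt ((n : ℝ) - 1)))

/-!
Both `Γ₊` and the strain profile `h(s) = (1 + s²/(p-1))^(1/p - 1/2) (1 - s²)^(-1/p)` are products of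
powers and exponentials, and partial fractions give their logarithmic derivatives as `κ(s)` and
`s κ(s)` with the same positive factor `κ`. Dividing, `d log h / d log Γ₊ = s`, which is the
elasticity identity for `H₊ = h ∘ u₊`. It turns the characteristic expression into
`H₊^p (1 + u₊²/(p-1))^((p-2)/2) (1 - u₊²)`, and the exponents in `h` are exactly those that make
this equal to `1`. Here `p` stands for the dimension `n`, allowed to be any real number above `1`.
-/

open Set Filter Topology

theorem continuousAt_of_rightInvOn_of_strictMonoOn {α β : Type*}
    [LinearOrder α] [TopologicalSpace α] [OrderTopology α] [DenselyOrdered α]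
    [LinearOrder β] [TopologicalSpace β] [OrderTopology β]
    {f : α → β} {g : β → α} {s : Set α} {t : Set β} {b : β} (hf : StrictMonoOn f s)
    (hs : s ∈ 𝓝 (g b)) (ht : t ∈ 𝓝 b) (hfst : MapsTo f s t) (hgts : MapsTo g t s)
    (hfg : RightInvOn g f t) : ContinuousAt g b := by
  have hg_mono : MonotoneOn g t :=
    Function.monotoneOn_of_rightInvOn_of_mapsTo hf.monotoneOn hfg hgts
  have hgf : LeftInvOn g f s := hf.injOn.rightInvOn_of_leftInvOn hfg hfst hgts
  have hs_subset : s ⊆ g '' t := fun x hx ↦ ⟨f x, hfst hx, hgf hx⟩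
  exact continuousAt_of_monotoneOn_of_image_mem_nhds hg_mono ht (mem_of_superset hs hs_subset)

theorem hasDerivAt_comp_of_logDeriv_eq_mul {𝕜 : Type*} [NontriviallyNormedField 𝕜]
    {f g u : 𝕜 → 𝕜} {t c κ : 𝕜} (ht : t ≠ 0) (hκ : κ ≠ 0) (hu : ContinuousAt u t)
    (hfu : ∀ᶠ x in 𝓝 t, f (u x) = x) (hf : HasDerivAt f (f (u t) * κ) (u t))
    (hg : HasDerivAt g (g (u t) * (c * κ)) (u t)) :
    HasDerivAt (g ∘ u) (c * g (u t) / t) t := by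
  rw [hfu.self_of_nhds] at hf
  have hu' : HasDerivAt u (t * κ)⁻¹ t := hf.of_local_left_inverse hu (mul_ne_zero ht hκ) hfu
  refine (hg.comp t hu').congr_deriv ?_
  field_simp

theorem hasDerivAt_rpow_const_of_ne_zero {f : ℝ → ℝ} {f' x : ℝ} (q : ℝ) (hf : HasDerivAt f f' x)
    (hx : f x ≠ 0) : HasDerivAt (fun y ↦ f y ^ q) (f x ^ q * (q * (f' / f x))) x := by
  refine (hf.rpow_const (Or.inl hx)).congr_deriv ?_
  rw [Real.rpow_sub_one hx]
  ring

/-- The function `Γ₊` with the dimension `n` replaced by a real parameter `p`. -/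
noncomputable def realGammaPlus (p s : ℝ) : ℝ :=
  ((1 + s) / (1 - s)) ^ (1 / p) *
    Real.exp ((2 - p) / (p * √(p - 1)) * Real.arctan (s / √(p - 1)))

/-- The principal strain `H₊` as a function of its elasticity: `H₊(t) = strainProfile n (u₊(t))`. -/
noncomputable def strainProfile (p s : ℝ) : ℝ :=
  (1 + s ^ 2 / (p - 1)) ^ (1 / p - 1 / 2) * (1 - s ^ 2) ^ (-1 / p)

/-- The logarithmic derivative of `Γ₊` on `(-1, 1)`. -/
noncomputable def gammaPlusLogDeriv (p s : ℝ) : ℝ :=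
  (1 + s ^ 2) / ((1 - s ^ 2) * (p - 1 + s ^ 2))

/-- The characteristic expression `ℒH(t)`, with the dimension `n` replaced by a real parameter
`p`. -/
noncomputable def characteristicExpr (p : ℝ) (H : ℝ → ℝ) (t : ℝ) : ℝ :=
  (H t ^ 2 + t ^ 2 * deriv H t ^ 2 / (p - 1)) ^ ((p - 2) / 2) *
    (H t ^ 2 - t ^ 2 * deriv H t ^ 2)

theorem one_sub_sq_pos_of_mem_Ioo {s : ℝ} (hs : s ∈ Ioo (-1) 1) : 0 < 1 - s ^ 2 := by
  nlinarith [hs.1, hs.2]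

theorem realGammaPlus_zero (p : ℝ) : realGammaPlus p 0 = 1 := by
  simp [realGammaPlus]

theorem strainProfile_zero (p : ℝ) : strainProfile p 0 = 1 := by
  simp [strainProfile]

theorem realGammaPlus_pos (p : ℝ) {s : ℝ} (hs : s ∈ Ioo (-1) 1) : 0 < realGammaPlus p s :=
  mul_pos (Real.rpow_pos_of_pos (div_pos (by linarith [hs.1]) (by linarith [hs.2])) _)
    (Real.exp_pos _)

theorem strainProfile_pos {p s : ℝ} (hp : 1 < p) (hs : s ∈ Ioo (-1) 1) : 0 < strainProfile p s := by
  have : 0 < p - 1 := sub_pos.mpr hp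
  have : 0 < 1 - s ^ 2 := one_sub_sq_pos_of_mem_Ioo hs
  unfold strainProfile
  positivity

theorem gammaPlusLogDeriv_pos {p s : ℝ} (hp : 1 < p) (hs : s ∈ Ioo (-1) 1) :
    0 < gammaPlusLogDeriv p s := by
  have : 0 < p - 1 := sub_pos.mpr hp
  have : 0 < 1 - s ^ 2 := one_sub_sq_pos_of_mem_Ioo hs
  unfold gammaPlusLogDeriv
  positivity

theorem gammaPlusLogDeriv_eq_add {p s : ℝ} (hp : p ≠ 0) (hs : 1 - s ^ 2 ≠ 0)
    (hps : p - 1 + s ^ 2 ≠ 0) :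
    gammaPlusLogDeriv p s = 2 / (p * (1 - s ^ 2)) + (2 - p) / (p * (p - 1 + s ^ 2)) := by
  rw [gammaPlusLogDeriv]
  field_simp
  ring

theorem hasDerivAt_one_add_div_one_sub_rpow (q : ℝ) {s : ℝ} (hs : s ∈ Ioo (-1) 1) :
    HasDerivAt (fun x : ℝ ↦ ((1 + x) / (1 - x)) ^ q)
      (((1 + s) / (1 - s)) ^ q * (q * (2 / (1 - s ^ 2)))) s := by
  have hadd : 1 + s ≠ 0 := by linarith [hs.1]
  have hsub : 1 - s ≠ 0 := by linarith [hs.2]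
  have hquot : HasDerivAt (fun x : ℝ ↦ (1 + x) / (1 - x)) (2 / (1 - s) ^ 2) s := by
    refine (((hasDerivAt_id s).const_add 1).div ((hasDerivAt_id s).const_sub 1) hsub).congr_deriv ?_
    simp only [id]
    ring
  refine (hasDerivAt_rpow_const_of_ne_zero q hquot (div_ne_zero hadd hsub)).congr_deriv ?_
  rw [show 1 - s ^ 2 = (1 + s) * (1 - s) by ring]
  field_simp

theorem hasDerivAt_arctan_div {r : ℝ} (hr : r ≠ 0) (s : ℝ) :
    HasDerivAt (fun x ↦ Real.arctan (x / r)) (r / (r ^ 2 + s ^ 2)) s := by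
  refine ((hasDerivAt_id s).div_const r).arctan.congr_deriv ?_
  have hrs : r ^ 2 + s ^ 2 ≠ 0 := by positivity
  simp only [id]
  field_simp

theorem hasDerivAt_realGammaPlus {p s : ℝ} (hp : 1 < p) (hs : s ∈ Ioo (-1) 1) :
    HasDerivAt (realGammaPlus p) (realGammaPlus p s * gammaPlusLogDeriv p s) s := by
  have hp' : 0 < p - 1 := sub_pos.mpr hp
  have hsqrt : √(p - 1) ≠ 0 := (Real.sqrt_pos.mpr hp').ne'
  have hden : p - 1 + s ^ 2 ≠ 0 := by positivity
  have hs' := (one_sub_sq_pos_of_mem_Ioo hs).ne'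
  refine ((hasDerivAt_one_add_div_one_sub_rpow (1 / p) hs).mul
    ((hasDerivAt_arctan_div hsqrt s).const_mul ((2 - p) / (p * √(p - 1)))).exp).congr_deriv ?_
  rw [gammaPlusLogDeriv_eq_add (by positivity) hs' hden, realGammaPlus, Real.sq_sqrt hp'.le]
  field_simp

theorem hasDerivAt_strainProfile {p s : ℝ} (hp : 1 < p) (hs : s ∈ Ioo (-1) 1) :
    HasDerivAt (strainProfile p) (strainProfile p s * (s * gammaPlusLogDeriv p s)) s := by
  have hp' : 0 < p - 1 := sub_pos.mpr hp
  have hden : p - 1 + s ^ 2 ≠ 0 := by positivity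
  have hs' := (one_sub_sq_pos_of_mem_Ioo hs).ne'
  have hsq : HasDerivAt (fun x : ℝ ↦ x ^ 2) (2 * s) s := by simpa using hasDerivAt_pow 2 s
  have hleft := hasDerivAt_rpow_const_of_ne_zero (1 / p - 1 / 2)
    ((hsq.div_const (p - 1)).const_add 1) (by positivity)
  have hright := hasDerivAt_rpow_const_of_ne_zero (-1 / p) (hsq.const_sub 1) hs'
  refine (hleft.mul hright).congr_deriv ?_
  have hquot : 2 * s / (p - 1) / (1 + s ^ 2 / (p - 1)) = 2 * s / (p - 1 + s ^ 2) := by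
    field_simp
  rw [gammaPlusLogDeriv_eq_add (by positivity) hs' hden, strainProfile, hquot]
  field_simp
  ring

theorem strictMonoOn_realGammaPlus {p : ℝ} (hp : 1 < p) :
    StrictMonoOn (realGammaPlus p) (Ioo (-1) 1) := by
  refine strictMonoOn_of_deriv_pos (convex_Ioo _ _)
    (fun s hs ↦ (hasDerivAt_realGammaPlus hp hs).continuousAt.continuousWithinAt) fun s hs ↦ ?_
  rw [interior_Ioo] at hs
  rw [(hasDerivAt_realGammaPlus hp hs).deriv]
  exact mul_pos (realGammaPlus_pos p hs) (gammaPlusLogDeriv_pos hp hs)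

theorem strainProfile_rpow_mul_eq_one {p s : ℝ} (hp : 1 < p) (hs : s ∈ Ioo (-1) 1) :
    strainProfile p s ^ p * (1 + s ^ 2 / (p - 1)) ^ ((p - 2) / 2) * (1 - s ^ 2) = 1 := by
  have hp' : 0 < p - 1 := sub_pos.mpr hp
  have hp₀ : p ≠ 0 := by positivity
  have hA : 0 < 1 + s ^ 2 / (p - 1) := by positivity
  have hB := one_sub_sq_pos_of_mem_Ioo hs
  have hpow : strainProfile p s ^ p =
      (1 + s ^ 2 / (p - 1)) ^ (-((p - 2) / 2)) * (1 - s ^ 2)⁻¹ := by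
    rw [strainProfile, Real.mul_rpow (by positivity) (by positivity), ← Real.rpow_mul hA.le,
      ← Real.rpow_mul hB.le, div_mul_cancel₀ _ hp₀, Real.rpow_neg_one]
    congr 2
    field_simp
    ring
  rw [hpow, Real.rpow_neg hA.le]
  field_simp

theorem characteristicExpr_eq_of_elasticity {p s t : ℝ} {H : ℝ → ℝ} (hH : 0 < H t)
    (hs : 0 ≤ 1 + s ^ 2 / (p - 1)) (helast : t * deriv H t = s * H t) :
    characteristicExpr p H t =
      H t ^ p * (1 + s ^ 2 / (p - 1)) ^ ((p - 2) / 2) * (1 - s ^ 2) := by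
  have hsum : H t ^ 2 + (s * H t) ^ 2 / (p - 1) = H t ^ 2 * (1 + s ^ 2 / (p - 1)) := by ring
  have hpow : (H t ^ 2) ^ ((p - 2) / 2) = H t ^ p / H t ^ 2 := by
    rw [← Real.rpow_natCast_mul hH.le, ← Real.rpow_sub_natCast hH.ne']
    congr 1
    push_cast
    ring
  rw [characteristicExpr, ← mul_pow, helast, hsum, Real.mul_rpow (by positivity) hs, hpow]
  field_simp

theorem apply_one_eq_zero_of_rightInvOn_realGammaPlus {p : ℝ} {u : ℝ → ℝ} (hp : 1 < p)
    (hu_mem : MapsTo u (Ioi 0) (Ioo (-1) 1)) (hu_inv : RightInvOn u (realGammaPlus p) (Ioi 0)) :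
    u 1 = 0 := by
  have hu : realGammaPlus p (u 1) = realGammaPlus p 0 := by
    rw [hu_inv (mem_Ioi.mpr one_pos), realGammaPlus_zero]
  exact (strictMonoOn_realGammaPlus hp).injOn (hu_mem (mem_Ioi.mpr one_pos)) (by norm_num) hu

theorem hasDerivAt_strainProfile_comp {p t : ℝ} {u : ℝ → ℝ} (hp : 1 < p)
    (hu_mem : MapsTo u (Ioi 0) (Ioo (-1) 1)) (hu_inv : RightInvOn u (realGammaPlus p) (Ioi 0))
    (ht : 0 < t) :
    HasDerivAt (strainProfile p ∘ u) (u t * strainProfile p (u t) / t) t := by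
  have hs : u t ∈ Ioo (-1) 1 := hu_mem ht
  have hu_cont : ContinuousAt u t :=
    continuousAt_of_rightInvOn_of_strictMonoOn (strictMonoOn_realGammaPlus hp)
      (Ioo_mem_nhds hs.1 hs.2) (Ioi_mem_nhds ht) (fun _ ↦ realGammaPlus_pos p) hu_mem hu_inv
  exact hasDerivAt_comp_of_logDeriv_eq_mul ht.ne' (gammaPlusLogDeriv_pos hp hs).ne' hu_cont
    (eventually_of_mem (Ioi_mem_nhds ht) hu_inv)
    (hasDerivAt_realGammaPlus hp hs) (hasDerivAt_strainProfile hp hs)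

theorem stmt5_general {p : ℝ} (hp : 1 < p) {u H : ℝ → ℝ}
    (hu_mem : MapsTo u (Ioi 0) (Ioo (-1) 1)) (hu_inv : RightInvOn u (realGammaPlus p) (Ioi 0))
    (hH : EqOn H (strainProfile p ∘ u) (Ioi 0)) :
    H 1 = 1 ∧
    (∀ t : ℝ, 0 < t → DifferentiableAt ℝ H t ∧ t * deriv H t = u t * H t) ∧
    (∀ t : ℝ, 0 < t → characteristicExpr p H t = 1) := by
  have hderiv (t : ℝ) (ht : 0 < t) : HasDerivAt H (u t * H t / t) t := by
    rw [hH ht]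
    exact (hasDerivAt_strainProfile_comp hp hu_mem hu_inv ht).congr_of_eventuallyEq
      (eventually_of_mem (Ioi_mem_nhds ht) hH)
  have helast (t : ℝ) (ht : 0 < t) : t * deriv H t = u t * H t := by
    rw [(hderiv t ht).deriv, mul_div_cancel₀ _ ht.ne']
  refine ⟨?_, fun t ht ↦ ⟨(hderiv t ht).differentiableAt, helast t ht⟩, fun t ht ↦ ?_⟩
  · rw [hH (mem_Ioi.mpr one_pos), Function.comp_apply,
      apply_one_eq_zero_of_rightInvOn_realGammaPlus hp hu_mem hu_inv, strainProfile_zero]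
  · have hH_eq : H t = strainProfile p (u t) := hH ht
    have hH_pos : 0 < H t := hH_eq ▸ strainProfile_pos hp (hu_mem ht)
    have : 0 < p - 1 := sub_pos.mpr hp
    rw [characteristicExpr_eq_of_elasticity hH_pos (by positivity) (helast t ht), hH_eq,
      strainProfile_rpow_mul_eq_one hp (hu_mem ht)]

/-- Let `u₊ : (0,∞) → (-1,1)` be the inverse of `Γ₊` and
`H₊(t) = (1 + u₊(t)²/(n-1))^(1/n - 1/2) · (1 - u₊(t)²)^(-1/n)`.
Then `H₊(1) = 1`, `H₊` is differentiable on `(0,∞)` with elasticity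
`t H₊'(t) = u₊(t) H₊(t)`, and `H₊` satisfies the characteristic equation
`(H₊² + t²H₊'²/(n-1))^((n-2)/2) (H₊² - t²H₊'²) = 1`. -/
theorem stmt5 (n : ℕ) (hn : 2 ≤ n) (u : ℝ → ℝ)
    (hu_mem : ∀ t : ℝ, 0 < t → u t ∈ Set.Ioo (-1 : ℝ) 1)
    (hu_inv : ∀ t : ℝ, 0 < t → GammaPlus n (u t) = t)
    (H : ℝ → ℝ)
    (hH : ∀ t : ℝ, 0 < t →
      H t = (1 + (u t) ^ 2 / ((n : ℝ) - 1)) ^ ((1 : ℝ) / (n : ℝ) - 1 / 2) *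
        (1 - (u t) ^ 2) ^ (-(1 : ℝ) / (n : ℝ))) :
    H 1 = 1 ∧
    (∀ t : ℝ, 0 < t → DifferentiableAt ℝ H t ∧ t * deriv H t = u t * H t) ∧
    (∀ t : ℝ, 0 < t →
      ((H t) ^ 2 + t ^ 2 * (deriv H t) ^ 2 / ((n : ℝ) - 1)) ^ (((n : ℝ) - 2) / 2) *
        ((H t) ^ 2 - t ^ 2 * (deriv H t) ^ 2) = 1) :=
  stmt5_general (by exact_mod_cast hn) (fun t ht ↦ hu_mem t ht) (fun t ht ↦ hu_inv t ht)
    (fun t ht ↦ hH t ht)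
end

section
/- Let n ≥ 4 be an integer and let α_n > 1 satisfy (α_n² + n − 1)^{(n−2)/2} (α_n² − 1) = α_n^n; set b = n·(α_n² + n − 1)^{(n−2)/2} / α_n. Let α ≥ α_n, let (Ω, μ) be a probability measure space, and let X : Ω → [0, ∞) be a measurable function with ∫_Ω X dμ ≥ 1. Then: (i) for every real X₀ ≥ 0 one has the pointwise inequality ( α² + (n−1)·X₀^{2/(n−1)} )^{n/2} ≥ α^n + b·α·X₀, with equality if and only if X₀ = 0 or X₀ = (α/α_n)^{n−1}; (ii) consequently ∫_Ω ( α² + (n−1)·X^{2/(n−1)} )^{n/2} dμ ≥ α^n + b·α. -/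
open MeasureTheory

/-!
Both sides of the pointwise inequality are homogeneous of degree `n` in `(α, X₀ ^ (1 / (n - 1)))`.
Dividing by `X₀ ^ (n / (n - 1))` and writing `u = α / X₀ ^ (1 / (n - 1))`, it becomes
`b u ≤ (u² + n - 1) ^ (n / 2) - u ^ n`. The right-hand side is strictly convex on `[0, ∞)`, and the
equation defining `α_n` says that its tangent line at `α_n`, which has slope `b`, passes through the
origin. So the inequality is the tangent line inequality, with equality only at `u = α_n`.

For the convexity, put `v = √(u² + n - 1)`. Since `v - u = (n - 1) / (v + u)`, the derivative
`n u (v ^ (n - 2) - u ^ (n - 2))` is a constant times `u / (v + u)` times the secant slope of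
`y ↦ y ^ (n - 2)` between `u` and `v`. The quotient is strictly increasing in `u`, and
the slope is nondecreasing because `y ^ (n - 2)` is convex for `n ≥ 3`.

The integral bound follows by integrating the pointwise one.
-/

open Set

section Convexity

theorem slope_le_slope_of_convexOn {s : Set ℝ} {f : ℝ → ℝ} (hf : ConvexOn ℝ s f)
    {u₁ u₂ v₁ v₂ : ℝ} (hu₁ : u₁ ∈ s) (hu₂ : u₂ ∈ s) (hv₁ : v₁ ∈ s) (hv₂ : v₂ ∈ s)
    (h₁ : u₁ < v₁) (h₂ : u₂ < v₂) (hu : u₁ ≤ u₂) (hv : v₁ ≤ v₂) :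
    slope f u₁ v₁ ≤ slope f u₂ v₂ := by
  have h₁₂ : u₁ < v₂ := h₁.trans_le hv
  calc slope f u₁ v₁ ≤ slope f u₁ v₂ := hf.slope_mono hu₁ ⟨hv₁, h₁.ne'⟩ ⟨hv₂, h₁₂.ne'⟩ hv
    _ = slope f v₂ u₁ := slope_comm f u₁ v₂
    _ ≤ slope f v₂ u₂ := hf.slope_mono hv₂ ⟨hu₁, h₁₂.ne⟩ ⟨hu₂, h₂.ne⟩ hu
    _ = slope f u₂ v₂ := slope_comm f v₂ u₂

theorem tangent_lt_of_strictConvexOn {s : Set ℝ} {f : ℝ → ℝ} {f' a u : ℝ}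
    (hf : StrictConvexOn ℝ s f) (ha : a ∈ s) (hu : u ∈ s) (hne : u ≠ a)
    (hf' : HasDerivAt f f' a) : f a + f' * (u - a) < f u := by
  rcases hne.lt_or_gt with hlt | hgt
  · have h := hf.slope_lt_of_hasDerivAt hu ha hlt hf'
    rw [slope_def_field, div_lt_iff₀ (sub_pos.2 hlt)] at h
    linarith
  · have h := hf.lt_slope_of_hasDerivAt ha hu hgt hf'
    rw [slope_def_field, lt_div_iff₀ (sub_pos.2 hgt)] at h
    linarith

end Convexity

section EnergyGap

variable {n c u : ℝ}

theorem lt_sqrt_sq_add (hc : 0 < c) (u : ℝ) : u < √(u ^ 2 + c) :=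
  Real.lt_sqrt_of_sq_lt (by linarith)

theorem strictMonoOn_div_sqrt_sq_add_add_self (hc : 0 < c) :
    StrictMonoOn (fun u : ℝ ↦ u / (√(u ^ 2 + c) + u)) (Ici 0) := by
  intro u (hu : 0 ≤ u) v (hv : 0 ≤ v) huv
  have hcross : u * √(v ^ 2 + c) < v * √(u ^ 2 + c) := by
    refine lt_of_pow_lt_pow_left₀ 2 (by positivity) ?_
    rw [mul_pow, mul_pow, Real.sq_sqrt (by positivity), Real.sq_sqrt (by positivity)]
    have hsq : u ^ 2 < v ^ 2 := by gcongr
    nlinarith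
  rw [div_lt_div_iff₀ (by positivity) (by positivity)]
  linarith

theorem mul_sq_add_rpow_sub_rpow_eq_mul_slope (hc : 0 < c) (hu : 0 ≤ u) (r : ℝ) :
    u * ((u ^ 2 + c) ^ (r / 2) - u ^ r) =
      c * (u / (√(u ^ 2 + c) + u)) * slope (· ^ r) u √(u ^ 2 + c) := by
  have hc_eq : (√(u ^ 2 + c) - u) * (√(u ^ 2 + c) + u) = c := by
    linear_combination Real.sq_sqrt (by positivity : 0 ≤ u ^ 2 + c)
  have hsub : √(u ^ 2 + c) - u ≠ 0 := (sub_pos.2 (lt_sqrt_sq_add hc u)).ne'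
  have hadd : √(u ^ 2 + c) + u ≠ 0 := by positivity
  rw [Real.rpow_div_two_eq_sqrt r (by positivity), slope_def_field]
  field_simp
  linear_combination u * (√(u ^ 2 + c) ^ r - u ^ r) * hc_eq

theorem strictMonoOn_mul_sq_add_rpow_sub_rpow {r : ℝ} (hc : 0 < c) (hr : 1 ≤ r) :
    StrictMonoOn (fun u : ℝ ↦ u * ((u ^ 2 + c) ^ (r / 2) - u ^ r)) (Ici 0) := by
  have hslope_mono : MonotoneOn (fun u : ℝ ↦ slope (· ^ r) u √(u ^ 2 + c)) (Ici 0) := by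
    intro u (hu : 0 ≤ u) v (hv : 0 ≤ v) huv
    exact slope_le_slope_of_convexOn (convexOn_rpow hr) hu hv (Real.sqrt_nonneg _)
      (Real.sqrt_nonneg _) (lt_sqrt_sq_add hc u) (lt_sqrt_sq_add hc v) huv (by gcongr)
  have hslope_pos (u : ℝ) (hu : 0 ≤ u) : 0 < slope (fun y : ℝ ↦ y ^ r) u √(u ^ 2 + c) := by
    rw [slope_def_field]
    exact div_pos (sub_pos.2 (Real.rpow_lt_rpow hu (lt_sqrt_sq_add hc u) (by linarith)))
      (sub_pos.2 (lt_sqrt_sq_add hc u))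
  intro u (hu : 0 ≤ u) v (hv : 0 ≤ v) huv
  simp only [mul_sq_add_rpow_sub_rpow_eq_mul_slope hc hu,
    mul_sq_add_rpow_sub_rpow_eq_mul_slope hc hv]
  exact mul_lt_mul (mul_lt_mul_of_pos_left (strictMonoOn_div_sqrt_sq_add_add_self hc hu hv huv) hc)
    (hslope_mono hu hv huv.le) (hslope_pos u hu) (by positivity)

/-- The amount by which `(u² + c) ^ (n / 2)` exceeds its value `u ^ n` at `c = 0`. For `c = n - 1`
it is the dehomogenized form of `energyDensity n α x - α ^ n`, where `u = α / x ^ (1 / (n - 1))`. -/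
noncomputable def energyGap (n c u : ℝ) : ℝ :=
  (u ^ 2 + c) ^ (n / 2) - u ^ n

theorem hasDerivAt_energyGap (hc : 0 ≤ c) (hu : 0 < u) :
    HasDerivAt (energyGap n c) (n * (u * ((u ^ 2 + c) ^ ((n - 2) / 2) - u ^ (n - 2)))) u := by
  have hsq : HasDerivAt (fun y : ℝ ↦ y ^ 2 + c) (2 * u) u := by
    simpa using (hasDerivAt_pow 2 u).add_const c
  have hpow : u ^ (n - 1) = u * u ^ (n - 2) := by
    rw [mul_comm, ← Real.rpow_add_one hu.ne']
    ring_nf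
  refine ((hsq.rpow_const (p := n / 2) (Or.inl (by positivity))).sub
    (Real.hasDerivAt_rpow_const (p := n) (Or.inl hu.ne'))).congr_deriv ?_
  rw [hpow, show n / 2 - 1 = (n - 2) / 2 by ring]
  ring

theorem continuous_energyGap (hn : 0 ≤ n) : Continuous (energyGap n c) :=
  ((by fun_prop : Continuous fun u : ℝ ↦ u ^ 2 + c).rpow_const fun _ ↦ Or.inr (by positivity)).sub
    (continuous_id.rpow_const fun _ ↦ Or.inr hn)

theorem strictConvexOn_energyGap (hn : 3 ≤ n) (hc : 0 < c) :
    StrictConvexOn ℝ (Ici 0) (energyGap n c) := by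
  refine StrictMonoOn.strictConvexOn_of_deriv (convex_Ici 0)
    (continuous_energyGap (by linarith)).continuousOn ?_
  rw [interior_Ici]
  intro u (hu : 0 < u) v (hv : 0 < v) huv
  rw [(hasDerivAt_energyGap hc.le hu).deriv, (hasDerivAt_energyGap hc.le hv).deriv]
  exact mul_lt_mul_of_pos_left (strictMonoOn_mul_sq_add_rpow_sub_rpow hc
    (by linarith : 1 ≤ n - 2) hu.le hv.le huv) (by linarith)

end EnergyGap

section Critical

variable {n a u : ℝ}

/-- The slope `b` of the supporting line through the origin, `a` being the critical constant
`α_n`. -/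
noncomputable def criticalSlope (n a : ℝ) : ℝ :=
  n * (a ^ 2 + n - 1) ^ ((n - 2) / 2) / a

theorem criticalSlope_nonneg (hn : 1 ≤ n) (ha : 0 ≤ a) : 0 ≤ criticalSlope n a := by
  have hbase : 0 ≤ a ^ 2 + n - 1 := by nlinarith
  unfold criticalSlope
  positivity

theorem energyGap_eq_criticalSlope_mul (hn : 1 ≤ n) (ha : 0 < a)
    (hcrit : (a ^ 2 + n - 1) ^ ((n - 2) / 2) * (a ^ 2 - 1) = a ^ n) :
    energyGap n (n - 1) a = criticalSlope n a * a := by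
  have hbase : a ^ 2 + n - 1 ≠ 0 := by nlinarith
  have hpow : (a ^ 2 + n - 1) ^ (n / 2) =
      (a ^ 2 + n - 1) ^ ((n - 2) / 2) * (a ^ 2 + n - 1) := by
    rw [← Real.rpow_add_one hbase]
    ring_nf
  rw [energyGap, criticalSlope, ← add_sub_assoc, hpow, ← hcrit, div_mul_cancel₀ _ ha.ne']
  ring

theorem hasDerivAt_energyGap_criticalSlope (hn : 1 ≤ n) (ha : 0 < a)
    (hcrit : (a ^ 2 + n - 1) ^ ((n - 2) / 2) * (a ^ 2 - 1) = a ^ n) :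
    HasDerivAt (energyGap n (n - 1)) (criticalSlope n a) a := by
  have hpow : a ^ (n - 2) * a ^ 2 = (a ^ 2 + n - 1) ^ ((n - 2) / 2) * (a ^ 2 - 1) := by
    rw [hcrit, ← Real.rpow_add_natCast ha.ne']
    norm_num
  refine (hasDerivAt_energyGap (by linarith) ha).congr_deriv ?_
  rw [criticalSlope, eq_div_iff ha.ne', ← add_sub_assoc]
  linear_combination -n * hpow

theorem criticalSlope_mul_lt_energyGap (hn : 3 ≤ n) (ha : 0 < a)
    (hcrit : (a ^ 2 + n - 1) ^ ((n - 2) / 2) * (a ^ 2 - 1) = a ^ n) (hu : 0 ≤ u) (hne : u ≠ a) :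
    criticalSlope n a * u < energyGap n (n - 1) u := by
  have htangent := tangent_lt_of_strictConvexOn
    (strictConvexOn_energyGap hn (by linarith : 0 < n - 1)) (mem_Ici.2 ha.le) (mem_Ici.2 hu) hne
    (hasDerivAt_energyGap_criticalSlope (by linarith) ha hcrit)
  rw [energyGap_eq_criticalSlope_mul (by linarith) ha hcrit] at htangent
  linarith

end Critical

section EnergyDensity

variable {n a α x : ℝ}

/-- The integrand of the energy functional `ℰ[X]`, as a function of the value `x` of the random
variable `X`. -/
noncomputable def energyDensity (n α x : ℝ) : ℝ :=
  (α ^ 2 + (n - 1) * x ^ (2 / (n - 1))) ^ (n / 2)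

theorem sq_rpow_div_two (hα : 0 ≤ α) (n : ℝ) : (α ^ 2) ^ (n / 2) = α ^ n := by
  rw [Real.rpow_div_two_eq_sqrt n (sq_nonneg α), Real.sqrt_sq hα]

theorem energyDensity_zero (hn : n ≠ 1) (hα : 0 ≤ α) : energyDensity n α 0 = α ^ n := by
  rw [energyDensity, Real.zero_rpow (div_ne_zero two_ne_zero (sub_ne_zero.2 hn)), mul_zero,
    add_zero, sq_rpow_div_two hα]

theorem energyDensity_mul_rpow {u t : ℝ} (hn : 1 < n) (hu : 0 ≤ u) (ht : 0 < t) :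
    energyDensity n (u * t) (t ^ (n - 1)) = (u * t) ^ n + energyGap n (n - 1) u * t ^ n := by
  have hroot : (t ^ (n - 1)) ^ (2 / (n - 1)) = t ^ 2 := by
    rw [← Real.rpow_mul ht.le, mul_div_cancel₀ _ (sub_pos.2 hn).ne', Real.rpow_two]
  have hbase : (u * t) ^ 2 + (n - 1) * t ^ 2 = (u ^ 2 + (n - 1)) * t ^ 2 := by ring
  rw [energyDensity, hroot, hbase, Real.mul_rpow (by nlinarith) (by positivity),
    sq_rpow_div_two ht.le, energyGap, Real.mul_rpow hu ht.le]
  ring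

theorem exists_eq_rpow_and_eq_mul (hn : n ≠ 1) (hα : 0 ≤ α) (hx : 0 < x) :
    ∃ t > 0, ∃ u ≥ 0, x = t ^ (n - 1) ∧ α = u * t :=
  have ht : 0 < x ^ (n - 1)⁻¹ := by positivity
  ⟨x ^ (n - 1)⁻¹, ht, α / x ^ (n - 1)⁻¹, by positivity,
    (Real.rpow_inv_rpow hx.le (sub_ne_zero.2 hn)).symm, (div_mul_cancel₀ α ht.ne').symm⟩

theorem affine_lt_energyDensity (hn : 3 ≤ n) (ha : 0 < a)
    (hcrit : (a ^ 2 + n - 1) ^ ((n - 2) / 2) * (a ^ 2 - 1) = a ^ n) (hα : 0 ≤ α) (hx : 0 < x)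
    (hne : x ≠ (α / a) ^ (n - 1)) :
    α ^ n + criticalSlope n a * α * x < energyDensity n α x := by
  obtain ⟨t, ht, u, hu, rfl, rfl⟩ := exists_eq_rpow_and_eq_mul (by linarith : n ≠ 1) hα hx
  have hua : u ≠ a := by
    rintro rfl
    rw [mul_div_cancel_left₀ t ha.ne'] at hne
    exact hne rfl
  have hpow : t ^ n = t ^ (n - 1) * t := by
    rw [← Real.rpow_add_one ht.ne', sub_add_cancel]
  calc (u * t) ^ n + criticalSlope n a * (u * t) * t ^ (n - 1)
      = (u * t) ^ n + criticalSlope n a * u * t ^ n := by rw [hpow]; ring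
    _ < (u * t) ^ n + energyGap n (n - 1) u * t ^ n := by
      gcongr
      exact criticalSlope_mul_lt_energyGap hn ha hcrit hu hua
    _ = energyDensity n (u * t) (t ^ (n - 1)) :=
      (energyDensity_mul_rpow (by linarith) hu ht).symm

theorem energyDensity_div_rpow_eq_affine (hn : 1 < n) (ha : 0 < a)
    (hcrit : (a ^ 2 + n - 1) ^ ((n - 2) / 2) * (a ^ 2 - 1) = a ^ n) (hα : 0 ≤ α) :
    energyDensity n α ((α / a) ^ (n - 1)) =
      α ^ n + criticalSlope n a * α * (α / a) ^ (n - 1) := by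
  rcases hα.eq_or_lt with rfl | hα
  · rw [zero_div, Real.zero_rpow (sub_pos.2 hn).ne', energyDensity_zero hn.ne' le_rfl]
    ring
  have hpow : (α / a) ^ n = (α / a) ^ (n - 1) * (α / a) := by
    rw [← Real.rpow_add_one (by positivity), sub_add_cancel]
  have hscale := energyDensity_mul_rpow hn ha.le (div_pos hα ha)
  rw [mul_div_cancel₀ α ha.ne', energyGap_eq_criticalSlope_mul hn.le ha hcrit, hpow] at hscale
  rw [hscale]
  field_simp

theorem energyDensity_eq_affine_iff (hn : 3 ≤ n) (ha : 0 < a)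
    (hcrit : (a ^ 2 + n - 1) ^ ((n - 2) / 2) * (a ^ 2 - 1) = a ^ n) (hα : 0 ≤ α) (hx : 0 ≤ x) :
    energyDensity n α x = α ^ n + criticalSlope n a * α * x ↔
      x = 0 ∨ x = (α / a) ^ (n - 1) := by
  constructor
  · intro heq
    by_contra! hne
    exact (affine_lt_energyDensity hn ha hcrit hα (hx.lt_of_ne' hne.1) hne.2).ne' heq
  · rintro (rfl | rfl)
    · rw [energyDensity_zero (by linarith) hα, mul_zero, add_zero]
    · exact energyDensity_div_rpow_eq_affine (by linarith) ha hcrit hα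

theorem affine_le_energyDensity (hn : 3 ≤ n) (ha : 0 < a)
    (hcrit : (a ^ 2 + n - 1) ^ ((n - 2) / 2) * (a ^ 2 - 1) = a ^ n) (hα : 0 ≤ α) (hx : 0 ≤ x) :
    α ^ n + criticalSlope n a * α * x ≤ energyDensity n α x := by
  by_cases hzeros : x = 0 ∨ x = (α / a) ^ (n - 1)
  · exact ((energyDensity_eq_affine_iff hn ha hcrit hα hx).2 hzeros).ge
  · push Not at hzeros
    exact (affine_lt_energyDensity hn ha hcrit hα (hx.lt_of_ne' hzeros.1) hzeros.2).le

end EnergyDensity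

section Integral

variable {Ω : Type*} [MeasurableSpace Ω] {μ : Measure Ω} [IsProbabilityMeasure μ]

open scoped ENNReal in
theorem add_mul_lintegral_le_lintegral {c d : ℝ≥0∞} {X f : Ω → ℝ≥0∞}
    (h : ∀ᵐ ω ∂μ, c + d * X ω ≤ f ω) : c + d * ∫⁻ ω, X ω ∂μ ≤ ∫⁻ ω, f ω ∂μ :=
  calc c + d * ∫⁻ ω, X ω ∂μ ≤ c + ∫⁻ ω, d * X ω ∂μ := by
        gcongr
        exact lintegral_const_mul_le d X
    _ = ∫⁻ ω, c + d * X ω ∂μ := by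
        rw [lintegral_add_left measurable_const, lintegral_const, measure_univ, mul_one]
    _ ≤ ∫⁻ ω, f ω ∂μ := lintegral_mono_ae h

theorem ofReal_add_le_lintegral_of_affine_le {c d : ℝ} (hc : 0 ≤ c) (hd : 0 ≤ d) {X f : Ω → ℝ}
    (hX0 : ∀ᵐ ω ∂μ, 0 ≤ X ω) (hmean : 1 ≤ ∫⁻ ω, ENNReal.ofReal (X ω) ∂μ)
    (h : ∀ᵐ ω ∂μ, c + d * X ω ≤ f ω) :
    ENNReal.ofReal (c + d) ≤ ∫⁻ ω, ENNReal.ofReal (f ω) ∂μ := by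
  have hofReal : ∀ᵐ ω ∂μ,
      ENNReal.ofReal c + ENNReal.ofReal d * ENNReal.ofReal (X ω) ≤ ENNReal.ofReal (f ω) := by
    filter_upwards [hX0, h] with ω hω hle
    rw [← ENNReal.ofReal_mul hd, ← ENNReal.ofReal_add hc (mul_nonneg hd hω)]
    exact ENNReal.ofReal_le_ofReal hle
  calc ENNReal.ofReal (c + d) = ENNReal.ofReal c + ENNReal.ofReal d * 1 := by
        rw [ENNReal.ofReal_add hc hd, mul_one]
    _ ≤ ENNReal.ofReal c + ENNReal.ofReal d * ∫⁻ ω, ENNReal.ofReal (X ω) ∂μ := by gcongr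
    _ ≤ ∫⁻ ω, ENNReal.ofReal (f ω) ∂μ := add_mul_lintegral_le_lintegral hofReal

end Integral

theorem stmt15_general {n : ℝ} (hn : 3 ≤ n) {αn : ℝ} (hαn : 0 < αn)
    (hαncrit : (αn ^ 2 + n - 1) ^ ((n - 2) / 2) * (αn ^ 2 - 1) = αn ^ n)
    {b : ℝ} (hb : b = n * (αn ^ 2 + n - 1) ^ ((n - 2) / 2) / αn) {α : ℝ} (hα : 0 ≤ α)
    {Ω : Type*} [MeasurableSpace Ω] (μ : Measure Ω) [IsProbabilityMeasure μ]
    {X : Ω → ℝ} (hX0 : ∀ᵐ ω ∂μ, 0 ≤ X ω) (hmean : 1 ≤ ∫⁻ ω, ENNReal.ofReal (X ω) ∂μ) :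
    (∀ X₀ : ℝ, 0 ≤ X₀ →
      (α ^ 2 + (n - 1) * X₀ ^ (2 / (n - 1))) ^ (n / 2) ≥ α ^ n + b * α * X₀ ∧
      ((α ^ 2 + (n - 1) * X₀ ^ (2 / (n - 1))) ^ (n / 2) = α ^ n + b * α * X₀ ↔
        X₀ = 0 ∨ X₀ = (α / αn) ^ (n - 1))) ∧
    ENNReal.ofReal (α ^ n + b * α) ≤
      ∫⁻ ω, ENNReal.ofReal ((α ^ 2 + (n - 1) * X ω ^ (2 / (n - 1))) ^ (n / 2)) ∂μ := by
  obtain rfl : b = criticalSlope n αn := hb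
  have hb0 : 0 ≤ criticalSlope n αn := criticalSlope_nonneg (by linarith) hαn.le
  refine ⟨fun X₀ hX₀ ↦ ⟨affine_le_energyDensity hn hαn hαncrit hα hX₀,
    energyDensity_eq_affine_iff hn hαn hαncrit hα hX₀⟩, ?_⟩
  exact ofReal_add_le_lintegral_of_affine_le (by positivity) (by positivity) hX0 hmean
    (hX0.mono fun _ hω ↦ affine_le_energyDensity hn hαn hαncrit hα hω)

/-- Case 2 of the random-variable energy minimization.
Let `n ≥ 4`, let `α_n > 1` satisfy `(α_n² + n - 1)^((n-2)/2)(α_n² - 1) = α_n^n`,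
let `b = n(α_n² + n - 1)^((n-2)/2)/α_n`, and let `α ≥ α_n`.  Then pointwise
`(α² + (n-1)X₀^(2/(n-1)))^(n/2) ≥ α^n + bαX₀` for `X₀ ≥ 0`, with equality iff
`X₀ = 0` or `X₀ = (α/α_n)^(n-1)`; consequently for any probability space
`(Ω, μ)` and measurable `X ≥ 0` with mean at least `1`,
`∫ (α² + (n-1)X^(2/(n-1)))^(n/2) dμ ≥ α^n + bα`. -/
theorem stmt15 (n : ℕ) (hn : 4 ≤ n) (αn : ℝ) (hαn1 : 1 < αn)
    (hαncrit : (αn ^ 2 + (n : ℝ) - 1) ^ (((n : ℝ) - 2) / 2) * (αn ^ 2 - 1) = αn ^ (n : ℝ))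
    (b : ℝ) (hb : b = (n : ℝ) * (αn ^ 2 + (n : ℝ) - 1) ^ (((n : ℝ) - 2) / 2) / αn)
    (α : ℝ) (hα : αn ≤ α)
    {Ω : Type*} [MeasurableSpace Ω] (μ : Measure Ω) [IsProbabilityMeasure μ]
    (X : Ω → ℝ) (hXmeas : Measurable X) (hX0 : ∀ ω, 0 ≤ X ω)
    (hmean : 1 ≤ ∫⁻ ω, ENNReal.ofReal (X ω) ∂μ) :
    (∀ X₀ : ℝ, 0 ≤ X₀ →
      ((α ^ 2 + ((n : ℝ) - 1) * X₀ ^ ((2 : ℝ) / ((n : ℝ) - 1))) ^ ((n : ℝ) / 2) ≥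
          α ^ (n : ℝ) + b * α * X₀) ∧
      ((α ^ 2 + ((n : ℝ) - 1) * X₀ ^ ((2 : ℝ) / ((n : ℝ) - 1))) ^ ((n : ℝ) / 2) =
          α ^ (n : ℝ) + b * α * X₀ ↔
        X₀ = 0 ∨ X₀ = (α / αn) ^ ((n : ℝ) - 1))) ∧
    ENNReal.ofReal (α ^ (n : ℝ) + b * α) ≤
      ∫⁻ ω, ENNReal.ofReal
        ((α ^ 2 + ((n : ℝ) - 1) * (X ω) ^ ((2 : ℝ) / ((n : ℝ) - 1))) ^ ((n : ℝ) / 2)) ∂μ := by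
  have hn3 : (3 : ℝ) ≤ n := by exact_mod_cast (by lia : 3 ≤ n)
  have hαn0 : 0 < αn := one_pos.trans hαn1
  exact stmt15_general hn3 hαn0 hαncrit hb (hαn0.le.trans hα) μ (ae_of_all μ hX0) hmean
end
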